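/- arXiv:2503.00316 — 2 statements merged into one kernel-verified Lean document; each statement's English description precedes it below -/
import Mathlib

section
/- Let X be a compact metric space, f : X → X a continuous map, and Λ ⊆ X a closed f-invariant subset such that (1) the restriction f|_Λ : Λ → Λ is minimal and equicontinuous, (2) for every ε > 0 the union ⋃_{x∈Λ} V_ε^s(x) is dense in X, and (3) the product map f|_Λ × f : Λ × X → Λ × X is transitive. Then for every integer n with 2 ≤ n < |Λ| + 1 there exists δ_n > 0 such that DC1_n^{δ_n}(X,f) is a residual subset of X^n. -/
/-!
Equicontinuity upgrades transitivity of `f|_Λ × f` to a property of single points: for `p, z ∈ Λ`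
and non-empty open `O, W` there is a time `i` at which `f^i(p)` is close to `z` and `f^i(O)` meets
`W`. In particular every orbit in `Λ` is dense in `Λ`. An orbit that returns close to its starting
point then makes `f^j` uniformly close to the identity on `Λ` for arbitrarily large `j`, so distinct
points of `Λ` cannot come close at time `i`: by equicontinuity they would still be close at a time
`j ≥ i` when both are back near their starting points. Hence `Λ` is distal.

The stable set of each single `z ∈ Λ` is dense in `X`. Indeed, finitely many points of `Λ` are
enough for their stable sets to have dense union, and a finite union of nowhere dense sets is
nowhere dense, so the stable set of some `p ∈ Λ` is dense in a non-empty open set `O`; a time `i`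
as above carries it into the stable set of `z` while moving `O` onto any prescribed open set `W`.

Tuples whose coordinates shadow `n` distinct points of `Λ` are therefore dense, and so are tuples
whose coordinates all shadow the same point; the former are eventually separated, the latter
eventually close. Upper density one of the visiting times to open sets is a `G_δ` condition, so what
happens eventually on a dense set happens with upper density one on a residual set.
-/

open Filter Topology

/-- `V_ε^s(x)`: points whose forward orbit eventually stays ε-close (in limsup) to that of `x`. -/
def Vs {X : Type*} [MetricSpace X] (f : X → X) (x : X) (ε : ℝ) : Set X :=
  {y | Filter.limsup (fun i : ℕ => dist (f^[i] x) (f^[i] y)) Filter.atTop ≤ ε}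

open Classical in
/-- A DC1-`n`-`δ`-scrambled tuple. -/
def DC1Scrambled {X : Type*} [MetricSpace X] (f : X → X) {n : ℕ} (δ : ℝ)
    (x : Fin n → X) : Prop :=
  Filter.limsup (fun m : ℕ =>
      ((((Finset.range m).filter fun i => ∀ j k : Fin n, j < k →
        δ < dist (f^[i] (x j)) (f^[i] (x k))).card : ℝ) / m)) Filter.atTop = 1 ∧
  ∀ ε : ℝ, 0 < ε → Filter.limsup (fun m : ℕ =>
      ((((Finset.range m).filter fun i => ∀ j k : Fin n, j < k →
        dist (f^[i] (x j)) (f^[i] (x k)) < ε).card : ℝ) / m)) Filter.atTop = 1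

/-- `S` is a distal set for `f`. -/
def DistalSet {X : Type*} [MetricSpace X] (f : X → X) (S : Set X) : Prop :=
  ∀ n : ℕ, 2 ≤ n → ∀ x : Fin n → X, (∀ j, x j ∈ S) → Function.Injective x →
    ∃ c : ℝ, 0 < c ∧ ∀ i : ℕ, ∀ j k : Fin n, j < k → c ≤ dist (f^[i] (x j)) (f^[i] (x k))

/-- `f` restricted to `Λ` is minimal: `Λ` is the orbit closure of each of its points. -/
def MinimalOn {X : Type*} [TopologicalSpace X] (f : X → X) (Λ : Set X) : Prop :=
  ∀ x ∈ Λ, closure (Set.range fun i : ℕ => f^[i] x) = Λ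

/-- `f` restricted to `Λ` is equicontinuous. -/
def EquicontOnSet {X : Type*} [MetricSpace X] (f : X → X) (Λ : Set X) : Prop :=
  ∀ ε : ℝ, 0 < ε → ∃ δ : ℝ, 0 < δ ∧ ∀ x ∈ Λ, ∀ y ∈ Λ, dist x y ≤ δ →
    ∀ i : ℕ, dist (f^[i] x) (f^[i] y) ≤ ε

/-- Topological transitivity. -/
def IsTransitive {Z : Type*} [TopologicalSpace Z] (h : Z → Z) : Prop :=
  ∀ U V : Set Z, IsOpen U → IsOpen V → U.Nonempty → V.Nonempty →
    ∃ i : ℕ, ∃ z ∈ U, h^[i] z ∈ V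

/-- `N(x,ε)` : times at which the orbit of `x` returns ε-close to `x`. -/
def retTimes {X : Type*} [MetricSpace X] (f : X → X) (x : X) (ε : ℝ) : Set ℕ :=
  {i : ℕ | dist x (f^[i] x) ≤ ε}

/-- `R(f,𝓕)`: the set of `𝓕`-recurrent points. -/
def FRecurrent {X : Type*} [MetricSpace X] (f : X → X) (F : Set (Set ℕ)) : Set X :=
  {x | ∀ ε : ℝ, 0 < ε → retTimes f x ε ∈ F}

/-- The dual family `𝓕*`. -/
def dualFamily (F : Set (Set ℕ)) : Set (Set ℕ) :=
  {A | ∀ B ∈ F, (A ∩ B).Nonempty}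

/-- `Δ(A)`, the difference set of `A`. -/
def deltaSet (A : Set ℕ) : Set ℕ :=
  {i | ∃ j ∈ A, ∃ k ∈ A, j ≤ k ∧ i = k - j}

/-- `Δ(𝓕)`. -/
def deltaFamily (F : Set (Set ℕ)) : Set (Set ℕ) :=
  {B | ∃ A ∈ F, 0 ∈ A ∧ deltaSet A ⊆ B}

/-- `𝓕`-transitivity: `N(U,V) ∈ 𝓕` for all nonempty open `U, V`. -/
def FTransitive {X : Type*} [TopologicalSpace X] (f : X → X) (F : Set (Set ℕ)) : Prop :=
  ∀ U V : Set X, IsOpen U → IsOpen V → U.Nonempty → V.Nonempty →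
    {i : ℕ | ∃ x ∈ U, f^[i] x ∈ V} ∈ F

section UpperDensity

open Classical in
/-- The proportion of the times `0, …, m - 1` that lie in `A`; it is `0` for `m = 0`. -/
noncomputable def initialDensity (A : Set ℕ) (m : ℕ) : ℝ :=
  (Nat.count (· ∈ A) m : ℝ) / m

/-- The upper asymptotic density of a set of times, in terms of which DC1-scrambling is defined. -/
noncomputable def upperDensity (A : Set ℕ) : ℝ :=
  limsup (initialDensity A) atTop

lemma upperDensity_ofPred (p : ℕ → Prop) [DecidablePred p] :
    upperDensity {i | p i} =
      limsup (fun m : ℕ => (((Finset.range m).filter p).card : ℝ) / m) atTop := by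
  unfold upperDensity initialDensity
  simp only [Nat.count_eq_card_filter_range, Set.mem_ofPred_eq]
  congr!

variable {A B : Set ℕ}

lemma initialDensity_nonneg (A : Set ℕ) (m : ℕ) : 0 ≤ initialDensity A m := by
  unfold initialDensity
  positivity

lemma initialDensity_le_one (A : Set ℕ) (m : ℕ) : initialDensity A m ≤ 1 := by
  classical
  exact div_le_one_of_le₀ (mod_cast Nat.count_le _) m.cast_nonneg

lemma initialDensity_mono_left {m : ℕ} (h : ∀ i < m, i ∈ A → i ∈ B) :
    initialDensity A m ≤ initialDensity B m := by
  classical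
  exact div_le_div_of_nonneg_right (mod_cast Nat.count_mono_left h) m.cast_nonneg

lemma tendsto_initialDensity_one (h : ∀ᶠ i in atTop, i ∈ A) :
    Tendsto (initialDensity A) atTop (𝓝 1) := by
  obtain ⟨N, hN⟩ := eventually_atTop.1 h
  have hlim : Tendsto (fun m : ℕ => 1 - (N : ℝ) / m) atTop (𝓝 1) := by
    simpa using (tendsto_const_div_atTop_nhds_zero_nat (N : ℝ)).const_sub 1
  refine tendsto_of_tendsto_of_tendsto_of_le_of_le' hlim tendsto_const_nhds ?_
    (Eventually.of_forall (initialDensity_le_one A))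
  filter_upwards [eventually_ge_atTop N, eventually_gt_atTop 0] with m hNm hm
  classical
  obtain ⟨k, rfl⟩ := Nat.exists_eq_add_of_le hNm
  have hcount : k ≤ Nat.count (· ∈ A) (N + k) := by
    rw [Nat.count_add, Nat.count_of_forall fun i _ => hN _ (Nat.le_add_right N i)]
    exact Nat.le_add_left _ _
  have hpos : (0 : ℝ) < (N + k : ℕ) := mod_cast hm
  calc 1 - (N : ℝ) / (N + k : ℕ) = (k : ℝ) / (N + k : ℕ) := by
        rw [one_sub_div hpos.ne']
        simp
    _ ≤ initialDensity A (N + k) := by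
        unfold initialDensity
        gcongr

lemma upperDensity_eq_one_iff :
    upperDensity A = 1 ↔ ∀ c < 1, ∃ᶠ m in atTop, c < initialDensity A m := by
  have hbdd : IsBoundedUnder (· ≤ ·) atTop (initialDensity A) :=
    isBoundedUnder_of ⟨1, initialDensity_le_one A⟩
  have hcobdd : IsCoboundedUnder (· ≤ ·) atTop (initialDensity A) :=
    (isBoundedUnder_of ⟨0, initialDensity_nonneg A⟩).isCoboundedUnder_le
  have hle : upperDensity A ≤ 1 :=
    limsup_le_of_le hcobdd (Eventually.of_forall (initialDensity_le_one A))
  rw [← le_limsup_iff hcobdd hbdd]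
  exact hle.ge_iff_eq.symm

lemma upperDensity_eq_one_of_subset (hA : upperDensity A = 1) (hAB : A ⊆ B) :
    upperDensity B = 1 := by
  rw [upperDensity_eq_one_iff] at hA ⊢
  exact fun c hc => (hA c hc).mono fun m hm =>
    hm.trans_le (initialDensity_mono_left fun _ _ hi => hAB hi)

variable {Y : Type*} [TopologicalSpace Y] {P : ℕ → Set Y}

lemma isOpen_lt_initialDensity (hP : ∀ i, IsOpen (P i)) (c : ℝ) (m : ℕ) :
    IsOpen {y | c < initialDensity {i | y ∈ P i} m} := by
  rw [isOpen_iff_mem_nhds]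
  intro y hy
  have hvisits : ∀ᶠ y' in 𝓝 y, ∀ i ∈ Set.Iio m, y ∈ P i → y' ∈ P i :=
    (eventually_all_finite (Set.finite_Iio m)).2 fun i _ =>
      eventually_imp_distrib_left.2 fun hi => (hP i).mem_nhds hi
  filter_upwards [hvisits] with y' hy'
  exact lt_of_lt_of_le hy (initialDensity_mono_left hy')

lemma isGδ_upperDensity_eq_one (hP : ∀ i, IsOpen (P i)) :
    IsGδ {y | upperDensity {i | y ∈ P i} = 1} := by
  obtain ⟨c, -, hc_lt, hc_lim⟩ := exists_seq_strictMono_tendsto (1 : ℝ)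
  have hset : {y | upperDensity {i | y ∈ P i} = 1} =
      ⋂ (q : ℕ) (M : ℕ), ⋃ m ≥ M, {y | c q < initialDensity {i | y ∈ P i} m} := by
    ext y
    simp only [Set.mem_ofPred_eq, Set.mem_iInter, Set.mem_iUnion, upperDensity_eq_one_iff,
      frequently_atTop, exists_prop]
    refine ⟨fun h q => h _ (hc_lt q), fun h b hb M => ?_⟩
    obtain ⟨q, hq⟩ := (hc_lim.eventually_const_lt hb).exists
    obtain ⟨m, hm, hlt⟩ := h q M
    exact ⟨m, hm, hq.trans hlt⟩
  rw [hset]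
  exact .iInter fun q => .iInter fun M =>
    (isOpen_biUnion fun m _ => isOpen_lt_initialDensity hP (c q) m).isGδ

lemma eventually_residual_upperDensity_eq_one (hP : ∀ i, IsOpen (P i))
    (hdense : Dense {y | ∀ᶠ i in atTop, y ∈ P i}) :
    ∀ᶠ y in residual Y, upperDensity {i | y ∈ P i} = 1 :=
  residual_of_dense_Gδ (isGδ_upperDensity_eq_one hP)
    (hdense.mono fun _ hy => (tendsto_initialDensity_one hy).limsup_eq)

end UpperDensity

lemma isNowhereDense_biUnion_of_finite {ι Y : Type*} [TopologicalSpace Y] {t : Set ι}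
    (ht : t.Finite) {s : ι → Set Y} (hs : ∀ i ∈ t, IsNowhereDense (s i)) :
    IsNowhereDense (⋃ i ∈ t, s i) := by
  induction t, ht using Set.Finite.induction_on with
  | empty => simp
  | insert _ _ ih =>
    rw [Set.forall_mem_insert] at hs
    rw [Set.biUnion_insert, IsNowhereDense, closure_union,
      interior_union_isClosed_of_interior_empty isClosed_closure (ih hs.2)]
    exact hs.1

section StableSet

/-- The points whose orbit is eventually strictly `ε`-close to that of `x`. Unlike `Vs`, it does
not involve a `limsup`, whose value is meaningless for unbounded distances. -/
def stableSet {X : Type*} [PseudoMetricSpace X] (f : X → X) (x : X) (ε : ℝ) : Set X :=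
  {y | ∀ᶠ i in atTop, dist (f^[i] x) (f^[i] y) < ε}

lemma Vs_subset_stableSet {X : Type*} [MetricSpace X] [BoundedSpace X] (f : X → X) (x : X)
    {ε ε' : ℝ} (h : ε < ε') : Vs f x ε ⊆ stableSet f x ε' := fun _ hy =>
  eventually_lt_of_limsup_lt (lt_of_le_of_lt hy h) <|
    isBoundedUnder_of ⟨Metric.diam Set.univ, fun _ =>
      Metric.dist_le_diam_of_mem (Bornology.IsBounded.all _) (Set.mem_univ _) (Set.mem_univ _)⟩

variable {X : Type*} [PseudoMetricSpace X] {f : X → X}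

lemma stableSet_subset_stableSet_add {x x' : X} {η : ℝ}
    (h : ∀ i, dist (f^[i] x') (f^[i] x) ≤ η) (ε : ℝ) :
    stableSet f x ε ⊆ stableSet f x' (η + ε) := by
  intro y hy
  filter_upwards [hy] with i hi
  exact (dist_triangle _ _ _).trans_lt (add_lt_add_of_le_of_lt (h i) hi)

lemma iterate_mem_stableSet {x y : X} {ε : ℝ} (h : y ∈ stableSet f x ε) (k : ℕ) :
    f^[k] y ∈ stableSet f (f^[k] x) ε := by
  filter_upwards [(tendsto_add_atTop_nat k).eventually h] with i hi
  simpa only [Function.iterate_add_apply] using hi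

end StableSet

section Equicontinuous

variable {X : Type*} [MetricSpace X] {f : X → X} {Λ : Set X}

lemma exists_iterate_dist_lt_and_inter_nonempty {hinv : Set.MapsTo f Λ Λ}
    (heq : EquicontOnSet f Λ) (htrans : IsTransitive (Prod.map (hinv.restrict f Λ Λ) f))
    {p z : X} (hp : p ∈ Λ) (hz : z ∈ Λ) {ε : ℝ} (hε : 0 < ε) {O W : Set X}
    (hO : IsOpen O) (hO' : O.Nonempty) (hW : IsOpen W) (hW' : W.Nonempty) :
    ∃ i : ℕ, dist (f^[i] p) z < ε ∧ (O ∩ f^[i] ⁻¹' W).Nonempty := by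
  obtain ⟨δ, hδ, hequi⟩ := heq (ε / 2) (half_pos hε)
  obtain ⟨i, ⟨q, y⟩, ⟨hqp, hyO⟩, hi⟩ := htrans
    (Metric.ball ⟨p, hp⟩ δ ×ˢ O) (Metric.ball ⟨z, hz⟩ (ε / 2) ×ˢ W)
    (Metric.isOpen_ball.prod hO) (Metric.isOpen_ball.prod hW)
    (Set.Nonempty.prod ⟨_, Metric.mem_ball_self hδ⟩ hO')
    (Set.Nonempty.prod ⟨_, Metric.mem_ball_self (half_pos hε)⟩ hW')
  rw [Prod.map_iterate, Set.MapsTo.iterate_restrict] at hi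
  obtain ⟨hqz, hyW⟩ := hi
  have hpq : dist (f^[i] p) (f^[i] q) ≤ ε / 2 :=
    hequi p hp q q.2 (Metric.mem_ball'.1 hqp).le i
  have hqz : dist (f^[i] q) z < ε / 2 := hqz
  exact ⟨i, by linarith [dist_triangle (f^[i] p) (f^[i] q) z], y, hyO, hyW⟩

lemma subset_closure_orbit_of_isTransitive {hinv : Set.MapsTo f Λ Λ} (heq : EquicontOnSet f Λ)
    (htrans : IsTransitive (Prod.map (hinv.restrict f Λ Λ) f)) {x : X} (hx : x ∈ Λ) :
    Λ ⊆ closure (Set.range fun i : ℕ => f^[i] x) := by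
  intro z hz
  rw [Metric.mem_closure_range_iff]
  intro ε hε
  obtain ⟨i, hi, -⟩ := exists_iterate_dist_lt_and_inter_nonempty heq htrans hx hz hε
    isOpen_univ ⟨x, trivial⟩ isOpen_univ ⟨x, trivial⟩
  exact ⟨i, by rwa [dist_comm]⟩

lemma frequently_forall_dist_iterate_le (hinv : Set.MapsTo f Λ Λ) (heq : EquicontOnSet f Λ)
    (horbit : ∀ x ∈ Λ, Λ ⊆ closure (Set.range fun i : ℕ => f^[i] x)) {ε : ℝ} (hε : 0 < ε) :
    ∃ᶠ j in atTop, ∀ w ∈ Λ, dist (f^[j] w) w ≤ ε := by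
  rw [frequently_atTop]
  intro N
  obtain rfl | ⟨z, hz⟩ := Λ.eq_empty_or_nonempty
  · exact ⟨N, le_rfl, fun _ hw => hw.elim⟩
  obtain ⟨δ, hδ, hequi⟩ := heq (ε / 3) (by positivity)
  obtain ⟨i, hi⟩ := Metric.mem_closure_range_iff.1 (horbit _ (hinv.iterate N hz) hz) δ hδ
  rw [← Function.iterate_add_apply, dist_comm] at hi
  refine ⟨i + N, Nat.le_add_left N i, fun w hw => ?_⟩
  obtain ⟨k, hk⟩ := Metric.mem_closure_range_iff.1 (horbit z hz hw) (min δ (ε / 3))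
    (by positivity)
  rw [lt_min_iff] at hk
  have hshadow : dist (f^[i + N] w) (f^[i + N] (f^[k] z)) ≤ ε / 3 :=
    hequi w hw _ (hinv.iterate k hz) hk.1.le _
  have hreturn : dist (f^[i + N] (f^[k] z)) (f^[k] z) ≤ ε / 3 := by
    rw [← Function.iterate_add_apply, add_comm, Function.iterate_add_apply]
    exact hequi _ (hinv.iterate _ hz) z hz hi.le k
  linarith [dist_triangle4 (f^[i + N] w) (f^[i + N] (f^[k] z)) (f^[k] z) w,
    dist_comm w (f^[k] z)]

lemma exists_forall_le_dist_iterate (hinv : Set.MapsTo f Λ Λ) (heq : EquicontOnSet f Λ)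
    (horbit : ∀ x ∈ Λ, Λ ⊆ closure (Set.range fun i : ℕ => f^[i] x)) {z w : X}
    (hz : z ∈ Λ) (hw : w ∈ Λ) (hne : z ≠ w) :
    ∃ c : ℝ, 0 < c ∧ ∀ i : ℕ, c ≤ dist (f^[i] z) (f^[i] w) := by
  by_contra! hprox
  have hε : 0 < dist z w / 4 := by
    have := dist_pos.2 hne
    positivity
  obtain ⟨δ, hδ, hequi⟩ := heq _ hε
  obtain ⟨i, hi⟩ := hprox δ hδ
  obtain ⟨j, hij, hj⟩ :=
    frequently_atTop.1 (frequently_forall_dist_iterate_le hinv heq horbit hε) i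
  obtain ⟨k, rfl⟩ := Nat.exists_eq_add_of_le' hij
  have hclose : dist (f^[k + i] z) (f^[k + i] w) ≤ dist z w / 4 := by
    simpa only [Function.iterate_add_apply] using
      hequi _ (hinv.iterate i hz) _ (hinv.iterate i hw) hi.le k
  linarith [hj z hz, hj w hw, dist_comm z (f^[k + i] z),
    dist_triangle4 z (f^[k + i] z) (f^[k + i] w) w]

lemma distalSet_of_pairwise {S : Set X}
    (h : ∀ x ∈ S, ∀ y ∈ S, x ≠ y → ∃ c : ℝ, 0 < c ∧ ∀ i : ℕ, c ≤ dist (f^[i] x) (f^[i] y)) :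
    DistalSet f S := by
  intro n _ x hx hinj
  have hsep : ∀ᶠ c in 𝓝[>] (0 : ℝ), ∀ j k : Fin n, j < k →
      ∀ i : ℕ, c ≤ dist (f^[i] (x j)) (f^[i] (x k)) := by
    simp only [eventually_all]
    intro j k hjk
    obtain ⟨c, hc, hle⟩ := h _ (hx j) _ (hx k) (hinj.ne hjk.ne)
    filter_upwards [Ioc_mem_nhdsGT hc] with c' hc' i
    exact hc'.2.trans (hle i)
  obtain ⟨c, hsep, hpos⟩ := (hsep.and self_mem_nhdsWithin).exists
  exact ⟨c, hpos, fun i j k hjk => hsep j k hjk i⟩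

lemma distalSet_of_isTransitive {hinv : Set.MapsTo f Λ Λ} (heq : EquicontOnSet f Λ)
    (htrans : IsTransitive (Prod.map (hinv.restrict f Λ Λ) f)) : DistalSet f Λ :=
  distalSet_of_pairwise fun _ hz _ hw => exists_forall_le_dist_iterate hinv heq
    (fun _ hx => subset_closure_orbit_of_isTransitive heq htrans hx) hz hw

lemma exists_not_isNowhereDense_stableSet [Nonempty X] (hΛ : TotallyBounded Λ)
    (heq : EquicontOnSet f Λ) (hunion : ∀ ε : ℝ, 0 < ε → Dense (⋃ x ∈ Λ, stableSet f x ε))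
    {ε : ℝ} (hε : 0 < ε) : ∃ p ∈ Λ, ¬ IsNowhereDense (stableSet f p ε) := by
  obtain ⟨δ, hδ, hequi⟩ := heq (ε / 2) (half_pos hε)
  obtain ⟨t, htΛ, htfin, ht⟩ := Metric.finite_approx_of_totallyBounded hΛ δ hδ
  have hsub : ⋃ x ∈ Λ, stableSet f x (ε / 2) ⊆ ⋃ p ∈ t, stableSet f p ε := by
    refine Set.iUnion₂_subset fun x hx => ?_
    obtain ⟨p, hp, hxp⟩ := Set.mem_iUnion₂.1 (ht hx)
    refine Set.Subset.trans ?_ (Set.subset_biUnion_of_mem hp)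
    simpa only [add_halves] using stableSet_subset_stableSet_add
      (hequi p (htΛ hp) x hx (Metric.mem_ball'.1 hxp).le) (ε / 2)
  have hdense := (hunion (ε / 2) (half_pos hε)).mono hsub
  by_contra! hall
  have hnowhere := isNowhereDense_biUnion_of_finite htfin fun p hp => hall p (htΛ hp)
  rw [IsNowhereDense, hdense.closure_eq, interior_univ] at hnowhere
  exact Set.univ_nonempty.ne_empty hnowhere

lemma dense_stableSet (hf : Continuous f) (hΛ : TotallyBounded Λ) {hinv : Set.MapsTo f Λ Λ}
    (heq : EquicontOnSet f Λ) (hunion : ∀ ε : ℝ, 0 < ε → Dense (⋃ x ∈ Λ, stableSet f x ε))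
    (htrans : IsTransitive (Prod.map (hinv.restrict f Λ Λ) f))
    {z : X} (hz : z ∈ Λ) {ε : ℝ} (hε : 0 < ε) : Dense (stableSet f z ε) := by
  have : Nonempty X := ⟨z⟩
  obtain ⟨p, hp, hO⟩ := exists_not_isNowhereDense_stableSet hΛ heq hunion (half_pos hε)
  obtain ⟨δ, hδ, hequi⟩ := heq (ε / 2) (half_pos hε)
  rw [dense_iff_inter_open]
  intro W hW hW'
  obtain ⟨i, hpz, y, hyO, hyW⟩ := exists_iterate_dist_lt_and_inter_nonempty heq htrans hp hz hδ
    isOpen_interior (Set.nonempty_iff_ne_empty.2 hO) hW hW'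
  obtain ⟨y', hy'W, hy'⟩ := mem_closure_iff.1 (interior_subset hyO) (f^[i] ⁻¹' W)
    (hW.preimage (hf.iterate i)) hyW
  refine ⟨f^[i] y', hy'W, ?_⟩
  have hshadow := stableSet_subset_stableSet_add
    (hequi z hz _ (hinv.iterate i hp) (by rw [dist_comm]; exact hpz.le)) (ε / 2)
    (iterate_mem_stableSet hy' i)
  rwa [add_halves] at hshadow

end Equicontinuous

section ScrambledTuples

lemma isOpen_forall_lt {ι Y : Type*} [Finite ι] [LT ι] [TopologicalSpace Y]
    {s : ι → ι → Set Y} (hs : ∀ j k, IsOpen (s j k)) :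
    IsOpen {y | ∀ j k : ι, j < k → y ∈ s j k} := by
  simp only [Set.ofPred_forall]
  exact isOpen_iInter_of_finite fun j => isOpen_iInter_of_finite fun k =>
    isOpen_iInter_of_finite fun _ => hs j k

section PseudoMetric

variable {X : Type*} [PseudoMetricSpace X] {f : X → X} {ι : Type*}

lemma continuous_dist_iterate_apply (hf : Continuous f) (i : ℕ) (j k : ι) :
    Continuous fun x : ι → X => dist (f^[i] (x j)) (f^[i] (x k)) :=
  ((hf.iterate i).comp (continuous_apply j)).dist ((hf.iterate i).comp (continuous_apply k))

variable [Finite ι] [LT ι]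

lemma eventually_residual_upperDensity_lt_dist (hf : Continuous f) {δ c : ℝ} (hδc : δ < c)
    {z : ι → X} (hdense : ∀ j, ∀ ε : ℝ, 0 < ε → Dense (stableSet f (z j) ε))
    (hsep : ∀ i : ℕ, ∀ j k : ι, j < k → c ≤ dist (f^[i] (z j)) (f^[i] (z k))) :
    ∀ᶠ x in residual (ι → X), upperDensity {i | ∀ j k : ι, j < k →
      δ < dist (f^[i] (x j)) (f^[i] (x k))} = 1 := by
  refine eventually_residual_upperDensity_eq_one (fun i => isOpen_forall_lt fun j k =>
    isOpen_lt continuous_const (continuous_dist_iterate_apply hf i j k)) ?_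
  have hshadow := dense_pi Set.univ fun j _ => hdense j ((c - δ) / 2) (by linarith)
  refine hshadow.mono fun x hx => ?_
  filter_upwards [eventually_all.2 fun j => hx j trivial] with i hi j k hjk
  have htri := dist_triangle4 (f^[i] (z j)) (f^[i] (x j)) (f^[i] (x k)) (f^[i] (z k))
  rw [dist_comm (f^[i] (x k))] at htri
  linarith [hi j, hi k, hsep i j k hjk]

lemma eventually_residual_upperDensity_dist_lt (hf : Continuous f) {z : X}
    (hdense : ∀ ε : ℝ, 0 < ε → Dense (stableSet f z ε)) :
    ∀ᶠ x in residual (ι → X), ∀ ε : ℝ, 0 < ε → upperDensity {i | ∀ j k : ι, j < k →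
      dist (f^[i] (x j)) (f^[i] (x k)) < ε} = 1 := by
  obtain ⟨u, -, hu_pos, hu_lim⟩ := exists_seq_strictAnti_tendsto (0 : ℝ)
  have hseq : ∀ r, ∀ᶠ x in residual (ι → X), upperDensity {i | ∀ j k : ι, j < k →
      dist (f^[i] (x j)) (f^[i] (x k)) < u r} = 1 := by
    intro r
    refine eventually_residual_upperDensity_eq_one (fun i => isOpen_forall_lt fun j k =>
      isOpen_lt (continuous_dist_iterate_apply hf i j k) continuous_const) ?_
    have hshadow := dense_pi Set.univ fun (_ : ι) _ => hdense _ (half_pos (hu_pos r))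
    refine hshadow.mono fun x hx => ?_
    filter_upwards [eventually_all.2 fun j => hx j trivial] with i hi j k _
    linarith [hi j, hi k, dist_triangle_left (f^[i] (x j)) (f^[i] (x k)) (f^[i] z)]
  filter_upwards [eventually_countable_forall.2 hseq] with x hx ε hε
  obtain ⟨r, hr⟩ := (hu_lim.eventually_lt_const hε).exists
  exact upperDensity_eq_one_of_subset (hx r) fun i hi j k hjk => (hi j k hjk).trans hr

end PseudoMetric

variable {X : Type*} [MetricSpace X] {f : X → X} {n : ℕ}

lemma dc1Scrambled_iff_upperDensity {δ : ℝ} {x : Fin n → X} :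
    DC1Scrambled f δ x ↔
      upperDensity {i | ∀ j k : Fin n, j < k → δ < dist (f^[i] (x j)) (f^[i] (x k))} = 1 ∧
      ∀ ε : ℝ, 0 < ε → upperDensity {i | ∀ j k : Fin n, j < k →
        dist (f^[i] (x j)) (f^[i] (x k)) < ε} = 1 := by
  classical
  simp only [DC1Scrambled, upperDensity_ofPred]

theorem DistalSet.exists_eventually_residual_dc1Scrambled {S : Set X} (hS : DistalSet f S)
    (hf : Continuous f) (hdense : ∀ z ∈ S, ∀ ε : ℝ, 0 < ε → Dense (stableSet f z ε))
    (hn : 2 ≤ n) {z : Fin n → X} (hz : ∀ j, z j ∈ S) (hinj : Function.Injective z) :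
    ∃ δ : ℝ, 0 < δ ∧ ∀ᶠ x in residual (Fin n → X), DC1Scrambled f δ x := by
  obtain ⟨c, hc, hsep⟩ := hS n hn z hz hinj
  have hfar := eventually_residual_upperDensity_lt_dist hf (half_lt_self hc)
    (fun j => hdense _ (hz j)) hsep
  have hnear := eventually_residual_upperDensity_dist_lt (ι := Fin n) hf
    (hdense _ (hz ⟨0, by omega⟩))
  exact ⟨c / 2, half_pos hc, (hfar.and hnear).mono fun _ => dc1Scrambled_iff_upperDensity.2⟩

end ScrambledTuples

lemma exists_fin_embedding_of_lt_mk_add_one {α : Type*} {n : ℕ}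
    (hn : (n : Cardinal) < Cardinal.mk α + 1) : Nonempty (Fin n ↪ α) := by
  have hle : (n : Cardinal) ≤ Cardinal.mk α := not_lt.1 fun hlt =>
    hn.not_ge (Cardinal.add_one_le_of_lt hlt)
  rw [← Cardinal.lift_mk_le']
  simpa using hle

theorem dc1_main_general {X : Type*} [MetricSpace X] (f : X → X) (hf : Continuous f) (Λ : Set X)
    (hΛ : TotallyBounded Λ) (hinv : Set.MapsTo f Λ Λ) (heq : EquicontOnSet f Λ)
    (hunion : ∀ ε : ℝ, 0 < ε → Dense (⋃ x ∈ Λ, stableSet f x ε))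
    (htrans : IsTransitive (Prod.map (Set.MapsTo.restrict f Λ Λ hinv) f)) :
    ∀ n : ℕ, 2 ≤ n → (n : Cardinal) < Cardinal.mk Λ + 1 →
      ∃ δ : ℝ, 0 < δ ∧ {x : Fin n → X | DC1Scrambled f δ x} ∈ residual (Fin n → X) := by
  intro n hn hcard
  obtain ⟨z⟩ := exists_fin_embedding_of_lt_mk_add_one hcard
  have hdistal : DistalSet f Λ := distalSet_of_isTransitive heq htrans
  have hdense : ∀ w ∈ Λ, ∀ ε : ℝ, 0 < ε → Dense (stableSet f w ε) := fun _ hw _ hε =>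
    dense_stableSet hf hΛ heq hunion htrans hw hε
  exact hdistal.exists_eventually_residual_dc1Scrambled hf hdense hn (fun j => (z j).2)
    (Subtype.val_injective.comp z.injective)

/-- Theorem 1.1: if `f|_Λ` is minimal and equicontinuous, the union of the
`V_ε^s(x)`, `x ∈ Λ`, is dense for every `ε > 0`, and `f|_Λ × f` is transitive, then for each
`2 ≤ n < |Λ| + 1` the set of DC1-`n`-`δₙ`-scrambled tuples is residual in `Xⁿ`. -/
theorem dc1_main {X : Type*} [MetricSpace X] [CompactSpace X]
    (f : X → X) (hf : Continuous f) (Λ : Set X)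
    (hclosed : IsClosed Λ) (hinv : Set.MapsTo f Λ Λ)
    (hmin : MinimalOn f Λ) (heq : EquicontOnSet f Λ)
    (hunion : ∀ ε : ℝ, 0 < ε → Dense (⋃ x ∈ Λ, Vs f x ε))
    (htrans : IsTransitive (Prod.map (Set.MapsTo.restrict f Λ Λ hinv) f)) :
    ∀ n : ℕ, 2 ≤ n → (n : Cardinal) < Cardinal.mk Λ + 1 →
      ∃ δ : ℝ, 0 < δ ∧ {x : Fin n → X | DC1Scrambled f δ x} ∈ residual (Fin n → X) := by
  exact dc1_main_general f hf Λ hclosed.isCompact.totallyBounded hinv heq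
    (fun ε hε => (hunion _ (half_pos hε)).mono <|
      Set.iUnion₂_mono fun x _ => Vs_subset_stableSet f x (half_lt_self hε)) htrans
end

section
/- Let X be a compact metric space, f : X → X a continuous map, and Λ ⊆ X a closed f-invariant subset such that f|_Λ : Λ → Λ is minimal and equicontinuous. Let x, y ∈ Λ and ε > 0. If V_ε^s(x) is dense in X and f is surjective, then V_{2ε}^s(y) is dense in X. -/
/-!
Pick `m` such that `f^[m] x` shadows `y` within `r := ε' - ε > 0` at all times; this is possible
because the orbit of `x` accumulates at `y` and the iterates of `f` are equicontinuous there.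
Applying `f^[m]` to a point that stays `ε`-close to the orbit of `x` gives one that stays
`(r + ε)`-close to the orbit of `y`. Hence `V_ε'^s(y)` contains the image of the dense set
`V_ε^s(x)` under a continuous map with dense range, and such an image is dense.
-/

open Filter Topology

theorem denseRange_iterate {X : Type*} [TopologicalSpace X] {f : X → X} (hf : Continuous f)
    (hrange : DenseRange f) (m : ℕ) : DenseRange f^[m] := by
  induction m with
  | zero => exact denseRange_id
  | succ m ih => exact ih.comp hrange (hf.iterate m)

theorem isBoundedUnder_le_dist {ι X : Type*} [PseudoMetricSpace X] [BoundedSpace X]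
    (l : Filter ι) (u v : ι → X) : IsBoundedUnder (· ≤ ·) l fun i => dist (u i) (v i) :=
  isBoundedUnder_of ⟨Metric.diam (Set.univ : Set X), fun _ =>
    Metric.dist_le_diam_of_mem (Bornology.IsBounded.all _) (Set.mem_univ _) (Set.mem_univ _)⟩

theorem isCoboundedUnder_le_dist {ι X : Type*} [PseudoMetricSpace X]
    (l : Filter ι) [l.NeBot] (u v : ι → X) :
    IsCoboundedUnder (· ≤ ·) l fun i => dist (u i) (v i) :=
  isCoboundedUnder_le_of_le l fun _ => dist_nonneg

theorem exists_forall_dist_iterate_lt {X : Type*} [PseudoMetricSpace X] {f : X → X} {x y : X}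
    (hy : y ∈ closure (Set.range fun i : ℕ => f^[i] x))
    (heq : EquicontinuousWithinAt (fun i : ℕ => f^[i]) (Set.range fun i : ℕ => f^[i] x) y)
    {r : ℝ} (hr : 0 < r) :
    ∃ m : ℕ, ∀ i : ℕ, dist (f^[i] y) (f^[i] (f^[m] x)) < r := by
  have : (𝓝[Set.range fun i : ℕ => f^[i] x] y).NeBot := mem_closure_iff_nhdsWithin_neBot.1 hy
  have hclose : ∀ᶠ w in 𝓝[Set.range fun i : ℕ => f^[i] x] y,
      ∀ i : ℕ, dist (f^[i] y) (f^[i] w) < r := heq _ (Metric.dist_mem_uniformity hr)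
  obtain ⟨_, hm, m, rfl⟩ := (hclose.and self_mem_nhdsWithin).exists
  exact ⟨m, hm⟩

theorem EquicontOnSet.equicontinuousOn {X : Type*} [MetricSpace X] {f : X → X} {Λ : Set X}
    (h : EquicontOnSet f Λ) : EquicontinuousOn (fun i : ℕ => f^[i]) Λ := by
  intro y hy
  refine Metric.uniformity_basis_dist_le.equicontinuousWithinAt_iff_right.2 fun ε hε => ?_
  obtain ⟨δ, hδ, hclose⟩ := h ε hε
  filter_upwards [self_mem_nhdsWithin,
    mem_nhdsWithin_of_mem_nhds (Metric.closedBall_mem_nhds y hδ)] with w hw hwy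
  exact hclose y hy w hw (Metric.mem_closedBall'.1 hwy)

section Vs

variable {X : Type*} [MetricSpace X] {f : X → X} {x y z : X} {ε ε' r : ℝ}

-- The real `limsup` of an unbounded sequence of distances is the junk value `0`.
theorem mem_Vs_iff [BoundedSpace X] :
    z ∈ Vs f x ε ↔ ∀ s > ε, ∀ᶠ i in atTop, dist (f^[i] x) (f^[i] z) < s :=
  limsup_le_iff (isCoboundedUnder_le_dist _ _ _) (isBoundedUnder_le_dist _ _ _)

theorem mapsTo_iterate_Vs (f : X → X) (x : X) (ε : ℝ) (m : ℕ) :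
    Set.MapsTo f^[m] (Vs f x ε) (Vs f (f^[m] x) ε) := by
  intro z hz
  have hshift := limsup_nat_add (fun i => dist (f^[i] x) (f^[i] z)) m
  simp only [Function.iterate_add_apply] at hshift
  exact hshift.trans_le hz

theorem Vs_subset_Vs_of_dist_le [BoundedSpace X]
    (h : ∀ i : ℕ, dist (f^[i] y) (f^[i] x) ≤ r) : Vs f x ε ⊆ Vs f y (r + ε) := by
  intro z hz
  refine mem_Vs_iff.2 fun s hs => ?_
  filter_upwards [mem_Vs_iff.1 hz (s - r) (lt_sub_iff_add_lt'.2 hs)] with i hi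
  calc dist (f^[i] y) (f^[i] z)
      ≤ dist (f^[i] y) (f^[i] x) + dist (f^[i] x) (f^[i] z) := dist_triangle _ _ _
    _ < r + (s - r) := add_lt_add_of_le_of_lt (h i) hi
    _ = s := add_sub_cancel _ _

theorem dense_transfer_general [BoundedSpace X] (hf : Continuous f) (hrange : DenseRange f)
    (hy : y ∈ closure (Set.range fun i : ℕ => f^[i] x))
    (heq : EquicontinuousWithinAt (fun i : ℕ => f^[i]) (Set.range fun i : ℕ => f^[i] x) y)
    (hε : ε < ε') (hdense : Dense (Vs f x ε)) : Dense (Vs f y ε') := by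
  obtain ⟨m, hm⟩ := exists_forall_dist_iterate_lt hy heq (sub_pos.2 hε)
  have hmaps : Set.MapsTo f^[m] (Vs f x ε) (Vs f y ε') := by
    have hsub := Vs_subset_Vs_of_dist_le (ε := ε) fun i => (hm i).le
    rw [sub_add_cancel] at hsub
    exact (mapsTo_iterate_Vs f x ε m).mono_right hsub
  have himage : Dense (f^[m] '' Vs f x ε) :=
    (denseRange_iterate hf hrange m).dense_image (hf.iterate m) hdense
  exact himage.mono hmaps.image_subset

end Vs

/-- Lemma 2.4: with `f|_Λ` minimal and equicontinuous, `x, y ∈ Λ`, if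
`V_ε^s(x)` is dense and `f` is surjective, then `V_{2ε}^s(y)` is dense. -/
theorem dense_transfer {X : Type*} [MetricSpace X] [CompactSpace X]
    (f : X → X) (hf : Continuous f) (Λ : Set X)
    (hclosed : IsClosed Λ) (hinv : Set.MapsTo f Λ Λ)
    (hmin : MinimalOn f Λ) (heq : EquicontOnSet f Λ)
    (x y : X) (hx : x ∈ Λ) (hy : y ∈ Λ) (ε : ℝ) (hε : 0 < ε)
    (hdense : Dense (Vs f x ε)) (hsurj : Function.Surjective f) :
    Dense (Vs f y (2 * ε)) :=
  dense_transfer_general hf hsurj.denseRange ((hmin x hx).ge hy)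
    ((heq.equicontinuousOn y hy).mono (subset_closure.trans (hmin x hx).le))
    (lt_two_mul_self hε) hdense
end
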